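/- Ergodicity: suppose ε < 0 or ε > 2/π. Then T̃_ε is ergodic with respect to the Lebesgue (uniform) probability measure μ on I × I. -/

import Mathlib

open MeasureTheory Real

/-- `rmod x` is the unique representative of `x` modulo 1 lying in `[-1/2, 1/2)`. -/
noncomputable def rmod (x : ℝ) : ℝ := x - ⌊x + 1/2⌋

/-- The map `T̃_ε (p, q) = (q, ⟪2q - p - 2ε tan(π q)⟫)`. -/
noncomputable def Ttilde (ε : ℝ) : ℝ × ℝ → ℝ × ℝ := fun x =>
  (rmod x.2, rmod (2 * x.2 - x.1 - 2 * ε * Real.tan (Real.pi * x.2)))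

/-- The unit square `I × I` with `I = [-1/2, 1/2)`. -/
def unitSq : Set (ℝ × ℝ) := Set.Ico (-(1:ℝ)/2) (1/2) ×ˢ Set.Ico (-(1:ℝ)/2) (1/2)

/-- The uniform (Lebesgue) probability measure on `I × I`. -/
noncomputable def unifSq : Measure (ℝ × ℝ) := volume.restrict unitSq

/-! Ergodicity is proved on the torus for every map `(x, y) ↦ (y, φ y - x)` for which the Fourier
coefficients of `e_n ∘ φ` at frequencies `|k| ≤ 2n` are exponentially small in `n`. The Koopman
operator then sends the characters `(a, b)` with `|a| ≤ |b|` into the smaller cone of characters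
with `|a| < |b|`, up to exponentially small errors. It preserves the `L²` norm, so it leaves no room
for an invariant function to have energy at the boundary of the cone: comparing energies, its
Fourier coefficients decay exponentially in the cone, and by time reversal, which swaps the
coordinates, also in the complementary one. The indicator of an invariant set is therefore almost
everywhere equal to a continuous function, hence almost everywhere constant.

For `φ q = 2q - 2ε tan (πq)` and `nε < 0`, the function `e_n ∘ φ` is the boundary value of a
holomorphic function on the punctured unit disc, because `i tan` is a Cayley transform of the
circle. Moving the contour to radius `r` bounds the coefficients, with a rate below `1` for every
`ε < 0`; for `ε > 0` the rate is `r⁻⁴ exp (-4πε (1 - r) / (1 + r))`, which drops below `1` for some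
`r` near `1` exactly when `πε > 2`. -/

section HilbertSpace

variable {ι 𝕜 H : Type*} [RCLike 𝕜] [NormedAddCommGroup H] [InnerProductSpace 𝕜 H]

theorem hasSum_norm_inner_sq (e : HilbertBasis ι 𝕜 H) (x : H) :
    HasSum (fun j ↦ ‖inner 𝕜 (e j) x‖ ^ 2) (‖x‖ ^ 2) := by
  simpa [e.repr_apply_apply] using lp.hasSum_norm (p := 2) (by norm_num) (e.repr x)

theorem exists_inner_eq_indicator (e : HilbertBasis ι 𝕜 H) (S : Set ι) (h : H) :
    ∃ g : H, ∀ j, inner 𝕜 (e j) g = S.indicator (fun j ↦ inner 𝕜 (e j) h) j := by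
  have hmem : Memℓp (S.indicator (fun j ↦ inner 𝕜 (e j) h)) 2 := by
    refine memℓp_gen (((hasSum_norm_inner_sq e h).summable.indicator S).congr fun j ↦ ?_)
    by_cases hj : j ∈ S <;> simp [hj]
  refine ⟨e.repr.symm ⟨_, hmem⟩, fun j ↦ ?_⟩
  rw [← e.repr_apply_apply, LinearIsometryEquiv.apply_symm_apply]

theorem norm_inner_sub_le_sum_mul_norm (e : HilbertBasis ι 𝕜 H) {S : Set ι} {g h : H}
    (hg : ∀ j, inner 𝕜 (e j) g = S.indicator (fun j ↦ inner 𝕜 (e j) h) j) (v : H) (D : Finset ι)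
    (hD : ∀ j ∉ S, j ∉ D → inner 𝕜 v (e j) = 0) :
    ‖inner 𝕜 v (h - g)‖ ≤ (∑ j ∈ D, ‖inner 𝕜 v (e j)‖) * ‖h‖ := by
  have hcoeff (j : ι) : ‖inner 𝕜 (e j) (h - g)‖ ≤ ‖h‖ := by
    have hbound : ‖inner 𝕜 (e j) h‖ ≤ ‖h‖ := by
      simpa [e.orthonormal.norm_eq_one] using norm_inner_le_norm (𝕜 := 𝕜) (e j) h
    by_cases hj : j ∈ S <;> simp [inner_sub_right, hg, hj, hbound]
  have hsupp : ∀ j ∉ D, inner 𝕜 v (e j) * inner 𝕜 (e j) (h - g) = 0 := by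
    intro j hj
    by_cases hjS : j ∈ S
    · simp [inner_sub_right, hg, hjS]
    · rw [hD j hjS hj, zero_mul]
  rw [(e.hasSum_inner_mul_inner v (h - g)).unique (hasSum_sum_of_ne_finset_zero hsupp),
    Finset.sum_mul]
  refine norm_sum_le_of_le D fun j _ ↦ ?_
  rw [norm_mul]
  exact mul_le_mul_of_nonneg_left (hcoeff j) (norm_nonneg _)

/- The orthonormal family `f` being the image of the basis under an isometry fixing `h`, the energy
of `h` over `A` is that of `f`-coefficients, which by Bessel is at most the energy over the smaller
set `S` up to the errors `η`. -/
theorem norm_inner_sq_le_of_inner_eq (e : HilbertBasis ι 𝕜 H) {f : ι → H} (hf : Orthonormal 𝕜 f)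
    {g h : H} (hinv : ∀ i, inner 𝕜 (f i) h = inner 𝕜 (e i) h) {S A : Set ι} (hSA : S ⊆ A)
    (hg : ∀ j, inner 𝕜 (e j) g = S.indicator (fun j ↦ inner 𝕜 (e j) h) j)
    {η : ι → ℝ} (hη : ∀ i, 0 ≤ η i) (hsum : Summable fun i ↦ 2 * η i + η i ^ 2)
    (herr : ∀ i ∈ A, ‖inner 𝕜 (f i) (h - g)‖ ≤ η i * ‖h‖) {i₀ : ι} (hi₀ : i₀ ∈ A \ S) :
    ‖inner 𝕜 (e i₀) h‖ ^ 2 ≤ (∑' i, (2 * η i + η i ^ 2)) * ‖h‖ ^ 2 := by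
  classical
  let E := fun j ↦ ‖inner 𝕜 (e j) h‖ ^ 2
  have hgE : HasSum (S.indicator E) (‖g‖ ^ 2) := by
    convert hasSum_norm_inner_sq e g using 2 with j
    by_cases hj : j ∈ S <;> simp [E, hg, hj]
  have hgh : ‖g‖ ≤ ‖h‖ := by
    refine (sq_le_sq₀ (norm_nonneg g) (norm_nonneg h)).1 ?_
    exact hasSum_le (Set.indicator_le_self' fun _ _ ↦ sq_nonneg _) hgE (hasSum_norm_inner_sq e h)
  have hupper (i : ι) :
      A.indicator E i ≤ ‖inner 𝕜 (f i) g‖ ^ 2 + (2 * η i + η i ^ 2) * ‖h‖ ^ 2 := by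
    have := hη i
    refine Set.indicator_apply_le' (fun hi ↦ ?_) fun _ ↦ by positivity
    have hfg : ‖inner 𝕜 (f i) g‖ ≤ ‖h‖ := by
      simpa [hf.norm_eq_one] using (norm_inner_le_norm (𝕜 := 𝕜) (f i) g).trans
        (mul_le_mul_of_nonneg_left hgh (norm_nonneg _))
    have htri : ‖inner 𝕜 (e i) h‖ ≤ ‖inner 𝕜 (f i) g‖ + η i * ‖h‖ := by
      rw [← hinv, ← sub_add_cancel h g, inner_add_right, add_comm, sub_add_cancel]
      exact (norm_add_le _ _).trans (add_le_add_right (herr i hi) _)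
    calc E i ≤ (‖inner 𝕜 (f i) g‖ + η i * ‖h‖) ^ 2 := pow_le_pow_left₀ (norm_nonneg _) htri 2
      _ = ‖inner 𝕜 (f i) g‖ ^ 2 + (2 * η i * ‖inner 𝕜 (f i) g‖ * ‖h‖ + η i ^ 2 * ‖h‖ ^ 2) := by ring
      _ ≤ ‖inner 𝕜 (f i) g‖ ^ 2 + (2 * η i * ‖h‖ * ‖h‖ + η i ^ 2 * ‖h‖ ^ 2) := by gcongr
      _ = _ := by ring
  have hlower (j : ι) : (if j = i₀ then E i₀ else 0) + S.indicator E j ≤ A.indicator E j := by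
    obtain rfl | hj := eq_or_ne j i₀
    · simp [hi₀.1, hi₀.2]
    · simpa [hj] using Set.indicator_le_indicator_of_subset hSA (fun _ ↦ sq_nonneg _) j
  have hle : E i₀ + ‖g‖ ^ 2 ≤ ∑' i, ‖inner 𝕜 (f i) g‖ ^ 2 + (∑' i, (2 * η i + η i ^ 2)) * ‖h‖ ^ 2 :=
    hasSum_le (fun j ↦ (hlower j).trans (hupper j)) ((hasSum_ite_eq i₀ _).add hgE)
      ((hf.inner_products_summable g).hasSum.add (hsum.hasSum.mul_right _))
  linarith [hf.tsum_inner_products_le (x := g)]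

end HilbertSpace

section ContourShift

open Filter Metric Topology

variable {E : Type*} [NormedAddCommGroup E]

theorem norm_circleAverage_le_of_norm_le [NormedSpace ℝ E] {f : ℂ → E} {c : ℂ} {R B : ℝ}
    (hf : ∀ z ∈ sphere c |R|, ‖f z‖ ≤ B) : ‖circleAverage f c R‖ ≤ B := by
  have hle : ‖∫ θ in 0..2 * π, f (circleMap c R θ)‖ ≤ B * |2 * π - 0| :=
    intervalIntegral.norm_integral_le_of_norm_le_const fun θ _ ↦ hf _ (circleMap_mem_sphere' c R θ)
  rw [sub_zero, abs_of_pos two_pi_pos] at hle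
  rw [circleAverage, norm_smul, norm_inv, Real.norm_of_nonneg two_pi_pos.le]
  exact (inv_mul_le_iff₀' two_pi_pos).2 hle

variable [NormedSpace ℂ E]

theorem circleAverage_eq_circleAverage_of_differentiable_on_annulus_off_countable
    [CompleteSpace E] {f : ℂ → E} {c : ℂ} {r R : ℝ} (hr : 0 < r) (hrR : r ≤ R) {s : Set ℂ}
    (hs : s.Countable) (hc : ContinuousOn f (closedBall c R \ ball c r))
    (hd : ∀ z ∈ (ball c R \ closedBall c r) \ s, DifferentiableAt ℂ f z) :
    circleAverage f c R = circleAverage f c r := by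
  rw [circleAverage_eq_circleIntegral (hr.trans_le hrR).ne', circleAverage_eq_circleIntegral hr.ne',
    Complex.circleIntegral_sub_center_inv_smul_eq_of_differentiable_on_annulus_off_countable
      hr hrR hs hc hd]

theorem tendsto_circleAverage_nhdsLT {f : ℂ → E} {c : ℂ} {r R B : ℝ} (hR : 0 < R) (hrR : r < R)
    {s : Set ℂ} (hs : s.Countable) (hcont : ContinuousOn f (ball c R \ ball c r))
    (hbdd : ∀ z ∈ ball c R \ ball c r, ‖f z‖ ≤ B)
    (hboundary : ∀ z ∈ sphere c R \ s, ContinuousWithinAt f (ball c R) z) :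
    Tendsto (circleAverage f c) (𝓝[<] R) (𝓝 (circleAverage f c R)) := by
  have hmem : ∀ᶠ ρ in 𝓝[<] R, ∀ θ, circleMap c ρ θ ∈ ball c R \ ball c r := by
    filter_upwards [Ioo_mem_nhdsLT (max_lt hR hrR)] with ρ hρ θ
    have hρ' := max_lt_iff.1 hρ.1
    have hdist : dist (circleMap c ρ θ) c = ρ := circleMap_mem_sphere c hρ'.1.le θ
    exact ⟨hdist.trans_lt hρ.2, fun h ↦ (hρ'.2.trans_eq hdist.symm).not_gt h⟩
  refine Tendsto.const_smul ?_ _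
  refine intervalIntegral.tendsto_integral_filter_of_dominated_convergence (fun _ ↦ B) ?_ ?_
    intervalIntegrable_const ?_
  · filter_upwards [hmem] with ρ hρ
    exact (hcont.comp_continuous (continuous_circleMap c ρ) hρ).aestronglyMeasurable
  · filter_upwards [hmem] with ρ hρ
    exact .of_forall fun θ _ ↦ hbdd _ (hρ θ)
  · filter_upwards [(hs.preimage_circleMap c hR.ne').ae_notMem volume] with θ hθ _
    refine (hboundary _ ⟨circleMap_mem_sphere c hR.le θ, hθ⟩).tendsto.comp ?_
    refine tendsto_nhdsWithin_iff.2 ⟨?_, hmem.mono fun ρ hρ ↦ (hρ θ).1⟩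
    have : Continuous fun ρ ↦ circleMap c ρ θ := by unfold circleMap; fun_prop
    exact (this.tendsto R).mono_left nhdsWithin_le_nhds

theorem circleAverage_eq_circleAverage_of_bounded_of_continuousWithinAt [CompleteSpace E]
    {f : ℂ → E} {c : ℂ} {r R B : ℝ} (hr : 0 < r) (hrR : r < R) {s : Set ℂ} (hs : s.Countable)
    (hd : ∀ z ∈ ball c R \ ball c r, DifferentiableAt ℂ f z)
    (hbdd : ∀ z ∈ ball c R \ ball c r, ‖f z‖ ≤ B)
    (hboundary : ∀ z ∈ sphere c R \ s, ContinuousWithinAt f (ball c R) z) :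
    circleAverage f c R = circleAverage f c r := by
  have hcont : ContinuousOn f (ball c R \ ball c r) :=
    fun z hz ↦ (hd z hz).continuousAt.continuousWithinAt
  refine tendsto_nhds_unique
    (tendsto_circleAverage_nhdsLT (hr.trans hrR) hrR hs hcont hbdd hboundary) ?_
  refine tendsto_const_nhds.congr' ?_
  filter_upwards [Ioo_mem_nhdsLT hrR] with ρ hρ
  refine (circleAverage_eq_circleAverage_of_differentiable_on_annulus_off_countable hr hρ.1.le
    Set.countable_empty (hcont.mono ?_) fun z hz ↦ hd z ?_).symm
  · gcongr
    exact closedBall_subset_ball hρ.2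
  · exact ⟨ball_subset_ball hρ.2.le hz.1.1, fun h ↦ hz.1.2 (ball_subset_closedBall h)⟩

end ContourShift

section CayleyTransform

open Metric

/-- The holomorphic function on the punctured unit disc whose boundary value at `w = e^{2ix}` is
`e^{i (2mx + κ tan x)}`, since the Cayley transform `(w - 1) / (w + 1)` of `w` is `i tan x`. -/
noncomputable def cayleyExp (m : ℤ) (κ : ℝ) (w : ℂ) : ℂ :=
  w ^ m * Complex.exp (κ * ((w - 1) / (w + 1)))

theorem re_sub_one_div_add_one_le {w : ℂ} (hw : ‖w‖ < 1) :
    ((w - 1) / (w + 1)).re ≤ -((1 - ‖w‖) / (1 + ‖w‖)) := by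
  have hne : w + 1 ≠ 0 := fun h ↦ by
    simp [eq_neg_of_add_eq_zero_left h] at hw
  have hre : ((w - 1) / (w + 1)).re = -((1 - ‖w‖ ^ 2) / ‖w + 1‖ ^ 2) := by
    rw [Complex.div_re, ← add_div, ← Complex.normSq_eq_norm_sq, ← Complex.normSq_eq_norm_sq,
      ← neg_div]
    congr 1
    simp only [Complex.normSq_apply, Complex.sub_re, Complex.add_re, Complex.sub_im,
      Complex.add_im, Complex.one_re, Complex.one_im]
    ring
  have hnorm : ‖w + 1‖ ≤ 1 + ‖w‖ := by
    simpa [add_comm] using norm_add_le w 1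
  have hsq : 0 ≤ 1 - ‖w‖ ^ 2 := sub_nonneg.2 (pow_le_one₀ (norm_nonneg w) hw.le)
  rw [hre, neg_le_neg_iff]
  calc (1 - ‖w‖) / (1 + ‖w‖) = (1 - ‖w‖ ^ 2) / (1 + ‖w‖) ^ 2 := by field_simp; ring
    _ ≤ (1 - ‖w‖ ^ 2) / ‖w + 1‖ ^ 2 := by gcongr

theorem norm_cayleyExp_le (m : ℤ) {κ : ℝ} (hκ : 0 ≤ κ) {w : ℂ} (hw : ‖w‖ < 1) :
    ‖cayleyExp m κ w‖ ≤ ‖w‖ ^ m * exp (-(κ * ((1 - ‖w‖) / (1 + ‖w‖)))) := by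
  rw [cayleyExp, norm_mul, norm_zpow, Complex.norm_exp, Complex.re_ofReal_mul, ← mul_neg]
  gcongr
  exact re_sub_one_div_add_one_le hw

theorem differentiableAt_cayleyExp (m : ℤ) (κ : ℝ) {w : ℂ} (hw₀ : w ≠ 0) (hw₁ : w ≠ -1) :
    DifferentiableAt ℂ (cayleyExp m κ) w := by
  have hne : w + 1 ≠ 0 := fun h ↦ hw₁ (eq_neg_of_add_eq_zero_left h)
  have hzpow : DifferentiableAt ℂ (fun w : ℂ ↦ w ^ m) w := differentiableAt_zpow.2 (.inl hw₀)
  unfold cayleyExp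
  fun_prop (disch := assumption)

theorem circleAverage_cayleyExp_one (m : ℤ) {κ : ℝ} (hκ : 0 ≤ κ) {r : ℝ} (hr : 0 < r)
    (hr' : r < 1) : circleAverage (cayleyExp m κ) 0 1 = circleAverage (cayleyExp m κ) 0 r := by
  obtain ⟨B, hB⟩ : ∃ B, ∀ z ∈ closedBall (0 : ℂ) 1 \ ball 0 r, ‖z ^ m‖ ≤ B := by
    refine ((isCompact_closedBall 0 1).diff isOpen_ball).exists_bound_of_continuousOn fun z hz ↦ ?_
    refine (continuousAt_zpow₀ z m (.inl ?_)).continuousWithinAt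
    rintro rfl
    exact hz.2 (mem_ball_self hr)
  refine circleAverage_eq_circleAverage_of_bounded_of_continuousWithinAt (B := B) hr hr'
    (Set.countable_singleton (-1)) (fun z hz ↦ ?_) (fun z hz ↦ ?_) fun z hz ↦ ?_
  · refine differentiableAt_cayleyExp m κ ?_ ?_ <;> rintro rfl
    · exact hz.2 (mem_ball_self hr)
    · simp at hz
  · have hz₁ : ‖z‖ < 1 := mem_ball_zero_iff.1 hz.1
    have hexp : exp (-(κ * ((1 - ‖z‖) / (1 + ‖z‖)))) ≤ 1 := by
      rw [exp_le_one_iff, neg_nonpos]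
      exact mul_nonneg hκ (div_nonneg (by linarith) (by positivity))
    calc ‖cayleyExp m κ z‖ ≤ ‖z‖ ^ m * exp (-(κ * ((1 - ‖z‖) / (1 + ‖z‖)))) :=
          norm_cayleyExp_le m hκ hz₁
      _ ≤ ‖z‖ ^ m := mul_le_of_le_one_right (by positivity) hexp
      _ ≤ B := by simpa using hB z ⟨ball_subset_closedBall hz.1, hz.2⟩
  · refine (differentiableAt_cayleyExp m κ ?_ hz.2).continuousAt.continuousWithinAt
    exact ne_zero_of_mem_unit_sphere (⟨z, hz.1⟩ : sphere (0 : ℂ) 1)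

theorem norm_circleAverage_cayleyExp_le (m : ℤ) {κ : ℝ} (hκ : 0 ≤ κ) {r : ℝ} (hr : 0 < r)
    (hr' : r < 1) :
    ‖circleAverage (cayleyExp m κ) 0 1‖ ≤ r ^ m * exp (-(κ * ((1 - r) / (1 + r)))) := by
  rw [circleAverage_cayleyExp_one m hκ hr hr']
  refine norm_circleAverage_le_of_norm_le fun z hz ↦ ?_
  have hz' : ‖z‖ = r := by rwa [mem_sphere_zero_iff_norm, abs_of_pos hr] at hz
  exact hz' ▸ norm_cayleyExp_le m hκ (hz'.trans_lt hr')

-- Also at the poles of `tan`, where both sides are `0` because `z / 0 = 0`.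
theorem exp_sub_one_div_exp_add_one (x : ℝ) :
    (Complex.exp (2 * x * Complex.I) - 1) / (Complex.exp (2 * x * Complex.I) + 1) =
      Complex.I * tan x := by
  have hsq : Complex.exp (2 * x * Complex.I) = Complex.exp (x * Complex.I) ^ 2 := by
    rw [← Complex.exp_nat_mul]; push_cast; ring_nf
  have hinv : Complex.exp (-x * Complex.I) * Complex.exp (x * Complex.I) = 1 := by
    rw [← Complex.exp_add]; simp
  have hsin : Complex.exp (2 * x * Complex.I) - 1 =
      2 * Complex.exp (x * Complex.I) * (Complex.I * Complex.sin x) := by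
    rw [hsq, Complex.sin]
    linear_combination hinv + (Complex.exp (x * Complex.I) ^ 2 -
      Complex.exp (x * Complex.I) * Complex.exp (-x * Complex.I)) * Complex.I_sq
  have hcos : Complex.exp (2 * x * Complex.I) + 1 =
      2 * Complex.exp (x * Complex.I) * Complex.cos x := by
    rw [hsq, Complex.cos]
    linear_combination -hinv
  rw [hsin, hcos, mul_div_mul_left _ _ (by simp [Complex.exp_ne_zero]), mul_div_assoc,
    Complex.ofReal_tan, Complex.tan]

theorem cayleyExp_circleMap (m : ℤ) (κ x : ℝ) :
    cayleyExp m κ (circleMap 0 1 (2 * x)) =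
      Complex.exp (2 * m * x * Complex.I + κ * tan x * Complex.I) := by
  have hw : circleMap 0 1 (2 * x) = Complex.exp (2 * x * Complex.I) := by simp [circleMap]
  rw [cayleyExp, hw, exp_sub_one_div_exp_add_one, ← Complex.exp_int_mul, ← Complex.exp_add]
  ring_nf

end CayleyTransform

section LatticeDecay

open Asymptotics Filter

theorem exists_linear_mul_pow_le {θ σ : ℝ} (hθ : 0 ≤ θ) (hσ : θ < σ) :
    ∃ B, 0 < B ∧ ∀ n : ℕ, (2 * n + 1) * θ ^ n ≤ B * σ ^ n := by
  have hnorm : ‖θ‖ < σ := by rwa [norm_of_nonneg hθ]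
  have hO : (fun n : ℕ ↦ (2 * n + 1) * θ ^ n) =O[atTop] fun n ↦ σ ^ n := by
    have h₁ := (isLittleO_pow_const_mul_const_pow_const_pow_of_norm_lt 1 hnorm).isBigO
    have h₀ := (isLittleO_pow_const_mul_const_pow_const_pow_of_norm_lt 0 hnorm).isBigO
    refine ((h₁.const_mul_left 2).add h₀).congr_left fun n ↦ ?_
    ring
  obtain ⟨B, hB, hbound⟩ := bound_of_isBigO_nat_atTop hO
  refine ⟨B, hB, fun n ↦ ?_⟩
  have hσ₀ : 0 < σ := hθ.trans_lt hσ
  simpa [abs_of_nonneg, hθ, hσ₀.le, show (0 : ℝ) ≤ 2 * n + 1 by positivity] using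
    hbound (x := n) (by positivity)

theorem exists_two_mul_add_sq_le_mul_pow {θ : ℝ} (hθ₀ : 0 ≤ θ) (hθ₁ : θ < 1) :
    ∃ B ρ : ℝ, 0 < B ∧ 0 < ρ ∧ ρ < 1 ∧ ∀ n : ℕ,
      2 * ((2 * n + 1) * θ ^ n) + ((2 * n + 1) * θ ^ n) ^ 2 ≤ B * ρ ^ (6 * n) := by
  obtain ⟨q, hq₀, hθq, hq₁⟩ := exists_rat_pow_btwn (n := 6) (by norm_num) hθ₁ one_pos
  set ρ := (q : ℝ)
  have hρ₀ : 0 < ρ := Rat.cast_pos.2 hq₀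
  have hρ₁ : ρ < 1 := by
    rwa [pow_lt_one_iff_of_nonneg hρ₀.le (by norm_num)] at hq₁
  obtain ⟨B, hB, hbound⟩ := exists_linear_mul_pow_le hθ₀ hθq
  refine ⟨2 * B + B ^ 2, ρ, by positivity, hρ₀, hρ₁, fun n ↦ ?_⟩
  have hle := hbound n
  rw [← pow_mul] at hle
  have hpow : ρ ^ (6 * n) ≤ 1 := pow_le_one₀ hρ₀.le hρ₁.le
  calc 2 * ((2 * n + 1) * θ ^ n) + ((2 * n + 1) * θ ^ n) ^ 2
      ≤ 2 * (B * ρ ^ (6 * n)) + (B * ρ ^ (6 * n)) ^ 2 := by gcongr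
    _ = (2 * B + B ^ 2 * ρ ^ (6 * n)) * ρ ^ (6 * n) := by ring
    _ ≤ (2 * B + B ^ 2 * 1) * ρ ^ (6 * n) := by gcongr
    _ = (2 * B + B ^ 2) * ρ ^ (6 * n) := by ring

theorem summable_pow_natAbs {ρ : ℝ} (hρ₀ : 0 ≤ ρ) (hρ₁ : ρ < 1) :
    Summable fun m : ℤ ↦ ρ ^ m.natAbs := by
  apply Summable.of_nat_of_neg <;> simpa using summable_geometric_of_lt_one hρ₀ hρ₁

theorem summable_pow_natAbs_add_natAbs {ρ : ℝ} (hρ₀ : 0 ≤ ρ) (hρ₁ : ρ < 1) :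
    Summable fun i : Fin 2 → ℤ ↦ ρ ^ ((i 0).natAbs + (i 1).natAbs) := by
  have hρ := summable_pow_natAbs hρ₀ hρ₁
  have hprod := hρ.mul_of_nonneg hρ (fun _ ↦ by positivity) fun _ ↦ by positivity
  refine ((finTwoArrowEquiv ℤ).summable_iff.2 hprod).congr fun i ↦ ?_
  simp [finTwoArrowEquiv, pow_add]

/-- The indices `i` in the cone `|i 0| ≤ |i 1|`, cut off at height `N`. The map
`(x, y) ↦ (y, φ y - x)` with expanding `φ` essentially moves this cone into itself. -/
def cone (N : ℕ) : Set (Fin 2 → ℤ) :=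
  {i | (i 0).natAbs ≤ (i 1).natAbs ∧ N ≤ (i 1).natAbs}

/-- The part of `cone N` which, up to exponentially small errors, contains the Fourier support of
the images of the characters indexed by `cone N`. -/
def coneImage (N : ℕ) : Set (Fin 2 → ℤ) :=
  {j | N ≤ (j 0).natAbs ∧ (j 0).natAbs < (j 1).natAbs}

theorem coneImage_subset_cone (N : ℕ) : coneImage N ⊆ cone N :=
  fun _ hj ↦ ⟨hj.2.le, hj.1.trans hj.2.le⟩

variable {𝕜 H : Type*} [RCLike 𝕜] [NormedAddCommGroup H] [InnerProductSpace 𝕜 H]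

/-- The matrix of the family `f` in the basis `e` behaves like that of the Koopman operator of
`(x, y) ↦ (y, φ y - x)` in the basis of characters, when `φ` expands: row `i` lives on the column
`j 0 = -i 1` and, for `i` in the cone `|i 0| ≤ |i 1|`, its entries outside the image cone
`|j 0| < |j 1|` are exponentially small at rate `θ`. -/
structure ExpandsCone (e : HilbertBasis (Fin 2 → ℤ) 𝕜 H) (f : (Fin 2 → ℤ) → H) (θ : ℝ) : Prop where
  orthonormal : Orthonormal 𝕜 f
  inner_eq_zero : ∀ i j, j 0 ≠ -i 1 → inner 𝕜 (f i) (e j) = 0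
  norm_inner_le : ∀ i j, (i 0).natAbs ≤ (i 1).natAbs → j 0 = -i 1 → (j 1).natAbs ≤ (i 1).natAbs →
    ‖inner 𝕜 (f i) (e j)‖ ≤ θ ^ (i 1).natAbs

namespace ExpandsCone

variable {e : HilbertBasis (Fin 2 → ℤ) 𝕜 H} {f : (Fin 2 → ℤ) → H} {θ : ℝ}

theorem nonneg (hf : ExpandsCone e f θ) : 0 ≤ θ := by
  have := hf.norm_inner_le ![0, 1] ![-1, 0] (by simp) (by simp) (by simp)
  simpa using (norm_nonneg _).trans this

theorem norm_inner_sub_le (hf : ExpandsCone e f θ) {N : ℕ} {g h : H}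
    (hg : ∀ j, inner 𝕜 (e j) g = (coneImage N).indicator (fun j ↦ inner 𝕜 (e j) h) j)
    {i : Fin 2 → ℤ} (hi : i ∈ cone N) :
    ‖inner 𝕜 (f i) (h - g)‖ ≤ (2 * (i 1).natAbs + 1) * θ ^ (i 1).natAbs * ‖h‖ := by
  set n := (i 1).natAbs
  let D : Finset (Fin 2 → ℤ) := (Finset.Icc (-n : ℤ) n).image fun m ↦ ![-i 1, m]
  have hD : ∀ j ∉ coneImage N, j ∉ D → inner 𝕜 (f i) (e j) = 0 := by
    intro j hjS hjD
    refine hf.inner_eq_zero i j fun hj₀ ↦ hjD (Finset.mem_image.2 ⟨j 1, Finset.mem_Icc.2 ?_, ?_⟩)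
    · have := hi.2
      simp only [coneImage, Set.mem_ofPred_eq, hj₀, Int.natAbs_neg, not_and, not_lt] at hjS
      omega
    · ext t; fin_cases t <;> simp [hj₀]
  have hcard : (D.card : ℝ) ≤ 2 * n + 1 := by
    have : D.card ≤ (Finset.Icc (-n : ℤ) n).card := Finset.card_image_le
    rw [Int.card_Icc] at this
    exact_mod_cast show D.card ≤ 2 * n + 1 by omega
  have hentry : ∀ j ∈ D, ‖inner 𝕜 (f i) (e j)‖ ≤ θ ^ n := by
    intro j hj
    obtain ⟨m, hm, rfl⟩ := Finset.mem_image.1 hj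
    rw [Finset.mem_Icc] at hm
    exact hf.norm_inner_le i _ hi.1 (by simp) (by simp; omega)
  refine (norm_inner_sub_le_sum_mul_norm e hg (f i) D hD).trans ?_
  have := hf.nonneg
  gcongr
  calc ∑ j ∈ D, ‖inner 𝕜 (f i) (e j)‖ ≤ D.card * θ ^ n := by
        simpa using Finset.sum_le_card_nsmul D _ _ hentry
    _ ≤ (2 * n + 1) * θ ^ n := by gcongr

theorem norm_inner_sq_le (hf : ExpandsCone e f θ) {h : H}
    (hinv : ∀ i, inner 𝕜 (f i) h = inner 𝕜 (e i) h) {B ρ : ℝ} (hB : 0 < B) (hρ₀ : 0 < ρ)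
    (hρ₁ : ρ < 1) (hbound : ∀ n : ℕ,
      2 * ((2 * n + 1) * θ ^ n) + ((2 * n + 1) * θ ^ n) ^ 2 ≤ B * ρ ^ (6 * n))
    {i₀ : Fin 2 → ℤ} (hi₀ : (i₀ 0).natAbs ≤ (i₀ 1).natAbs) :
    ‖inner 𝕜 (e i₀) h‖ ^ 2 ≤ B * ρ ^ (4 * (i₀ 1).natAbs) *
      (∑' i : Fin 2 → ℤ, ρ ^ ((i 0).natAbs + (i 1).natAbs)) * ‖h‖ ^ 2 := by
  set N := (i₀ 1).natAbs with hN
  obtain ⟨g, hg⟩ := exists_inner_eq_indicator e (coneImage N) h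
  let η : (Fin 2 → ℤ) → ℝ :=
    (cone N).indicator fun i ↦ (2 * (i 1).natAbs + 1) * θ ^ (i 1).natAbs
  have hη (i : Fin 2 → ℤ) : 0 ≤ η i :=
    Set.indicator_nonneg (fun _ _ ↦ by have := hf.nonneg; positivity) i
  have hle (i : Fin 2 → ℤ) :
      2 * η i + η i ^ 2 ≤ B * ρ ^ (4 * N) * ρ ^ ((i 0).natAbs + (i 1).natAbs) := by
    by_cases hi : i ∈ cone N
    · have hexp : 4 * N + ((i 0).natAbs + (i 1).natAbs) ≤ 6 * (i 1).natAbs := by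
        have := hi.1; have := hi.2; omega
      rw [mul_assoc, ← pow_add]
      simp only [η, Set.indicator_of_mem hi]
      exact (hbound _).trans (by gcongr _ * ?_; exact pow_le_pow_of_le_one hρ₀.le hρ₁.le hexp)
    · rw [show η i = 0 from Set.indicator_of_notMem hi _, mul_zero, zero_pow two_ne_zero, add_zero]
      positivity
  have hρ := (summable_pow_natAbs_add_natAbs hρ₀.le hρ₁).mul_left (B * ρ ^ (4 * N))
  have hsum : Summable fun i ↦ 2 * η i + η i ^ 2 :=
    hρ.of_nonneg_of_le (fun i ↦ by have := hη i; positivity) hle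
  have hmem : i₀ ∈ cone N \ coneImage N := by
    refine ⟨⟨hi₀, le_rfl⟩, fun hi ↦ ?_⟩
    exact (hi.1.trans_lt hi.2).ne hN
  refine (norm_inner_sq_le_of_inner_eq e hf.orthonormal hinv (coneImage_subset_cone N) hg hη hsum
    (fun i hi ↦ ?_) hmem).trans ?_
  · simpa only [η, Set.indicator_of_mem hi] using hf.norm_inner_sub_le hg hi
  · rw [← tsum_mul_left]
    gcongr
    exact hle _

theorem exists_norm_inner_le (hf : ExpandsCone e f θ) (hθ : θ < 1) {h : H}
    (hinv : ∀ i, inner 𝕜 (f i) h = inner 𝕜 (e i) h) :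
    ∃ C ρ : ℝ, 0 < ρ ∧ ρ < 1 ∧ ∀ i : Fin 2 → ℤ, (i 0).natAbs ≤ (i 1).natAbs →
      ‖inner 𝕜 (e i) h‖ ≤ C * ρ ^ ((i 0).natAbs + (i 1).natAbs) := by
  obtain ⟨B, ρ, hB, hρ₀, hρ₁, hbound⟩ := exists_two_mul_add_sq_le_mul_pow hf.nonneg hθ
  set K := ∑' i : Fin 2 → ℤ, ρ ^ ((i 0).natAbs + (i 1).natAbs)
  refine ⟨√(B * K) * ‖h‖, ρ, hρ₀, hρ₁, fun i hi ↦ ?_⟩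
  have hsq : ‖inner 𝕜 (e i) h‖ ^ 2 ≤ (√(B * K) * ‖h‖ * ρ ^ (2 * (i 1).natAbs)) ^ 2 := by
    refine (hf.norm_inner_sq_le hinv hB hρ₀ hρ₁ hbound hi).trans_eq ?_
    rw [mul_pow, mul_pow, sq_sqrt (by positivity)]
    ring
  refine ((sq_le_sq₀ (norm_nonneg _) (by positivity)).1 hsq).trans ?_
  gcongr _ * ?_
  exact pow_le_pow_of_le_one hρ₀.le hρ₁.le (by omega)

end ExpandsCone

end LatticeDecay

section Clopen

open Filter

theorem eventuallyConst_of_indicator_ae_eq_continuous {X R : Type*} [TopologicalSpace X]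
    [PreconnectedSpace X] [MeasurableSpace X] {μ : Measure X} [μ.IsOpenPosMeasure]
    [TopologicalSpace R] [T1Space R] [Zero R] [One R] [NeZero (1 : R)] {s : Set X} {g : X → R}
    (hg : Continuous g) (hs : s.indicator 1 =ᵐ[μ] g) : EventuallyConst s (ae μ) := by
  have hclosed (c : R) : IsClosed (g ⁻¹' {c}) := isClosed_singleton.preimage hg
  have hunion : g ⁻¹' {0} ∪ g ⁻¹' {1} = Set.univ := by
    refine (((hclosed 0).union (hclosed 1)).ae_eq_univ_iff_eq (μ := μ)).1 ?_
    filter_upwards [hs] with x hx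
    refine propext (iff_of_true ?_ trivial)
    by_cases hxs : x ∈ s
    · exact .inr (by simpa [hxs] using hx.symm)
    · exact .inl (by simpa [hxs] using hx.symm)
  have hcompl : g ⁻¹' {0} = (g ⁻¹' {1})ᶜ := by
    refine Set.Subset.antisymm (fun x hx₀ hx₁ ↦ zero_ne_one (α := R) ?_) ?_
    · rw [← Set.mem_singleton_iff.1 hx₀, ← Set.mem_singleton_iff.1 hx₁]
    · rwa [Set.compl_subset_iff_union, Set.union_comm]
  have hclopen : IsClopen (g ⁻¹' {1}) := ⟨hclosed 1, isClosed_compl_iff.1 (hcompl ▸ hclosed 0)⟩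
  rw [eventuallyConst_set]
  refine (isClopen_iff.1 hclopen).symm.imp (fun h ↦ ?_) fun h ↦ ?_ <;>
    filter_upwards [hs] with x hx
  · by_contra hxs
    have hgx : g x = 1 := h.ge (Set.mem_univ x)
    simp [hxs, hgx] at hx
  · intro hxs
    exact h.le (show g x = 1 by simpa [hxs] using hx.symm)

end Clopen

section Torus

open UnitAddTorus

-- The Fourier theory on `UnitAddTorus` normalises the circle by these instances, kept local.
attribute [local instance] instMeasureSpaceUnitAddCircle instIsAddHaarMeasureUnitAddCircleVolume
  instIsProbabilityMeasureUnitAddCircleVolume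

theorem exists_ae_eq_continuousMap_of_summable_mFourierCoeff {d : Type*} [Fintype d]
    (h : Lp ℂ 2 (volume : Measure (UnitAddTorus d))) (hsum : Summable (mFourierCoeff h)) :
    ∃ g : C(UnitAddTorus d, ℂ), h =ᵐ[volume] g := by
  have hsum' : Summable fun i ↦ mFourierCoeff h i • mFourier i :=
    .of_norm (by simpa only [norm_smul, mFourier_norm, mul_one] using hsum.norm)
  obtain ⟨g, hg⟩ := hsum'
  have hgh : ContinuousMap.toLp 2 volume ℂ g = h := by
    refine HasSum.unique ?_ (hasSum_mFourier_series_L2 h)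
    simpa using hg.mapL (ContinuousMap.toLp 2 volume ℂ)
  refine ⟨g, ?_⟩
  rw [← hgh]
  exact ContinuousMap.coeFn_toLp volume g

/-- The generalised standard map in Lagrangian coordinates: the phase space form
`(xₙ₋₁, xₙ) ↦ (xₙ, xₙ₊₁)` of the recurrence `xₙ₊₁ = φ xₙ - xₙ₋₁` on the circle. -/
def standardMap (φ : UnitAddCircle → UnitAddCircle) (t : UnitAddTorus (Fin 2)) :
    UnitAddTorus (Fin 2) :=
  ![t 1, φ (t 1) - t 0]

/-- The exchange of the two coordinates of the torus, which reverses time for `standardMap φ`. -/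
def torusSwap (t : UnitAddTorus (Fin 2)) : UnitAddTorus (Fin 2) :=
  ![t 1, t 0]

theorem measurePreserving_torusSwap : MeasurePreserving torusSwap volume volume := by
  have h := volume_preserving_finTwoArrow UnitAddCircle
  convert (h.symm.comp Measure.measurePreserving_swap).comp h using 2 with t
  rfl

theorem standardMap_torusSwap_standardMap (φ : UnitAddCircle → UnitAddCircle) :
    standardMap φ ∘ torusSwap ∘ standardMap φ = torusSwap := by
  ext t j
  fin_cases j <;> simp [standardMap, torusSwap]

variable {φ : UnitAddCircle → UnitAddCircle}

theorem measurePreserving_standardMap (hφ : Measurable φ) :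
    MeasurePreserving (standardMap φ) volume volume := by
  have hskew : MeasurePreserving (fun p : UnitAddCircle × UnitAddCircle ↦ (p.1, φ p.1 - p.2)) :=
    (MeasurePreserving.id volume).skew_product (g := fun x y ↦ φ x - y)
      (by fun_prop) (.of_forall fun x ↦ (Measure.measurePreserving_sub_left volume (φ x)).map_eq)
  have h := volume_preserving_finTwoArrow UnitAddCircle
  convert ((h.symm.comp hskew).comp h).comp measurePreserving_torusSwap using 1
  rfl

theorem mFourierCoeff_mFourier_comp_standardMap (i j : Fin 2 → ℤ) :
    mFourierCoeff (mFourier i ∘ standardMap φ) j =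
      if j 0 = -i 1 then fourierCoeff (fourier (i 1) ∘ φ) (j 1 - i 0) else 0 := by
  let F : Fin 2 → UnitAddCircle → ℂ :=
    ![fourier (-(j 0 + i 1)), fun x ↦ fourier (-(j 1 - i 0)) x • (fourier (i 1) ∘ φ) x]
  have hF (t : UnitAddTorus (Fin 2)) :
      mFourier (-j) t • (mFourier i ∘ standardMap φ) t = ∏ l, F l (t l) := by
    simp [F, mFourier, standardMap, Fin.prod_univ_two, fourier_add', sub_eq_add_neg,
      AddCircle.toCircle_add, AddCircle.toCircle_neg]
    ring
  have h₀ : ∫ x, F 0 x = if j 0 = -i 1 then 1 else 0 := by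
    simp only [← add_eq_zero_iff_eq_neg]
    rw [← Pi.single_apply, ← fourierCoeff_fourier (T := 1)]
    exact integral_congr_ae (.of_forall fun x ↦ by simp [F])
  have h₁ : ∫ x, F 1 x = fourierCoeff (fourier (i 1) ∘ φ) (j 1 - i 0) := rfl
  calc mFourierCoeff (mFourier i ∘ standardMap φ) j
      = ∫ t : UnitAddTorus (Fin 2), ∏ l, F l (t l) := integral_congr_ae (.of_forall hF)
    _ = (∫ x, F 0 x) * ∫ x, F 1 x := by
        rw [integral_fintype_prod_volume_eq_prod, Fin.prod_univ_two]
    _ = _ := by rw [h₀, h₁, ite_mul, one_mul, zero_mul]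

theorem norm_fourierCoeff_fourier_neg_comp (n k : ℤ) :
    ‖fourierCoeff (fourier (-n) ∘ φ) (-k)‖ = ‖fourierCoeff (fourier n ∘ φ) k‖ := by
  rw [← RCLike.norm_conj]
  simp [fourierCoeff, ← integral_conj]

theorem norm_fourierCoeff_fourier_comp_le {θ : ℝ}
    (hdecay : ∀ (n : ℕ) (k : ℤ), k.natAbs ≤ 2 * n → ‖fourierCoeff (fourier n ∘ φ) k‖ ≤ θ ^ n)
    {n k : ℤ} (hk : k.natAbs ≤ 2 * n.natAbs) : ‖fourierCoeff (fourier n ∘ φ) k‖ ≤ θ ^ n.natAbs := by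
  obtain ⟨m, rfl | rfl⟩ := n.eq_nat_or_neg
  · simpa using hdecay m k (by simpa using hk)
  · rw [← neg_neg k, norm_fourierCoeff_fourier_neg_comp]
    simpa using hdecay m (-k) (by simpa using hk)

/-- The Koopman operator `h ↦ h ∘ standardMap φ` on `L²`. -/
noncomputable def koopman (hφ : Measurable φ) :
    Lp ℂ 2 (volume : Measure (UnitAddTorus (Fin 2))) →ₗᵢ[ℂ]
      Lp ℂ 2 (volume : Measure (UnitAddTorus (Fin 2))) :=
  Lp.compMeasurePreservingₗᵢ ℂ (standardMap φ) (measurePreserving_standardMap hφ)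

theorem inner_mFourierBasis_koopman (hφ : Measurable φ) (i j : Fin 2 → ℤ) :
    inner ℂ (mFourierBasis j) (koopman hφ (mFourierBasis i)) =
      mFourierCoeff (mFourier i ∘ standardMap φ) j := by
  rw [← HilbertBasis.repr_apply_apply, mFourierBasis_repr, coe_mFourierBasis]
  have hT := measurePreserving_standardMap hφ
  refine integral_congr_ae ?_
  filter_upwards [Lp.coeFn_compMeasurePreserving (mFourierLp 2 i) hT,
    hT.quasiMeasurePreserving.ae_eq_comp (coeFn_mFourierLp 2 i)] with t h₁ h₂
  exact congrArg _ (h₁.trans h₂)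

theorem expandsCone_koopman (hφ : Measurable φ) {θ : ℝ}
    (hdecay : ∀ (n : ℕ) (k : ℤ), k.natAbs ≤ 2 * n → ‖fourierCoeff (fourier n ∘ φ) k‖ ≤ θ ^ n) :
    ExpandsCone (mFourierBasis (d := Fin 2)) (koopman hφ ∘ mFourierBasis) θ := by
  refine ⟨mFourierBasis.orthonormal.comp_linearIsometry _, fun i j hj ↦ ?_, fun i j hi hj hij ↦ ?_⟩
  · rw [Function.comp_apply, ← inner_conj_symm, inner_mFourierBasis_koopman,
      mFourierCoeff_mFourier_comp_standardMap, if_neg hj, map_zero]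
  · rw [Function.comp_apply, norm_inner_symm, inner_mFourierBasis_koopman,
      mFourierCoeff_mFourier_comp_standardMap, if_pos hj]
    exact norm_fourierCoeff_fourier_comp_le hdecay (by omega)

theorem exists_norm_mFourierCoeff_le_of_koopman_eq (hφ : Measurable φ) {θ : ℝ} (hθ : θ < 1)
    (hdecay : ∀ (n : ℕ) (k : ℤ), k.natAbs ≤ 2 * n → ‖fourierCoeff (fourier n ∘ φ) k‖ ≤ θ ^ n)
    {h : Lp ℂ 2 (volume : Measure (UnitAddTorus (Fin 2)))} (hinv : koopman hφ h = h) :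
    ∃ C ρ : ℝ, 0 < ρ ∧ ρ < 1 ∧ ∀ i : Fin 2 → ℤ, (i 0).natAbs ≤ (i 1).natAbs →
      ‖mFourierCoeff h i‖ ≤ C * ρ ^ ((i 0).natAbs + (i 1).natAbs) := by
  simp only [← mFourierBasis_repr, HilbertBasis.repr_apply_apply]
  refine (expandsCone_koopman hφ hdecay).exists_norm_inner_le hθ fun i ↦ ?_
  conv_lhs => rw [← hinv]
  exact (koopman hφ).inner_map_map _ _

theorem mFourierCoeff_comp_torusSwap (h : UnitAddTorus (Fin 2) → ℂ) (i : Fin 2 → ℤ) :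
    mFourierCoeff (h ∘ torusSwap) i = mFourierCoeff h ![i 1, i 0] := by
  have hinvol : Function.Involutive torusSwap := fun t ↦ by
    ext j; fin_cases j <;> rfl
  have hswap := measurePreserving_torusSwap
  have hemb := (MeasurableEquiv.ofInvolutive _ hinvol hswap.measurable).measurableEmbedding
  rw [mFourierCoeff, mFourierCoeff, ← hswap.integral_comp hemb]
  refine integral_congr_ae (.of_forall fun t ↦ ?_)
  simp only [Function.comp_apply, hinvol t]
  simp [mFourier, torusSwap, mul_comm]

theorem koopman_torusSwap_eq_of_koopman_eq (hφ : Measurable φ)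
    {h : Lp ℂ 2 (volume : Measure (UnitAddTorus (Fin 2)))} (hinv : koopman hφ h = h) :
    koopman hφ (Lp.compMeasurePreserving torusSwap measurePreserving_torusSwap h) =
      Lp.compMeasurePreserving torusSwap measurePreserving_torusSwap h := by
  have hT := measurePreserving_standardMap hφ
  have hS := measurePreserving_torusSwap
  calc koopman hφ (Lp.compMeasurePreserving torusSwap hS h)
      = koopman hφ (Lp.compMeasurePreserving torusSwap hS (koopman hφ h)) := by rw [hinv]
    _ = Lp.compMeasurePreserving _ (hT.comp (hS.comp hT)) h := by
        rw [Lp.compMeasurePreserving_comp_apply h hT (hS.comp hT),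
          Lp.compMeasurePreserving_comp_apply _ hS hT]
        rfl
    _ = Lp.compMeasurePreserving torusSwap hS h := by
        congr 1
        simp only [standardMap_torusSwap_standardMap]

theorem summable_mFourierCoeff_of_koopman_eq (hφ : Measurable φ) {θ : ℝ} (hθ : θ < 1)
    (hdecay : ∀ (n : ℕ) (k : ℤ), k.natAbs ≤ 2 * n → ‖fourierCoeff (fourier n ∘ φ) k‖ ≤ θ ^ n)
    {h : Lp ℂ 2 (volume : Measure (UnitAddTorus (Fin 2)))} (hinv : koopman hφ h = h) :
    Summable (mFourierCoeff h) := by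
  have hcoeff (i : Fin 2 → ℤ) : mFourierCoeff
      (Lp.compMeasurePreserving torusSwap measurePreserving_torusSwap h) ![i 1, i 0] =
        mFourierCoeff h i := by
    have hi : ![![i 1, i 0] 1, ![i 1, i 0] 0] = i := by ext j; fin_cases j <;> rfl
    conv_rhs => rw [← hi, ← mFourierCoeff_comp_torusSwap]
    refine integral_congr_ae ?_
    filter_upwards [Lp.coeFn_compMeasurePreserving h measurePreserving_torusSwap] with t ht
    rw [ht]
  obtain ⟨C₁, ρ₁, hρ₁, hρ₁', h₁⟩ := exists_norm_mFourierCoeff_le_of_koopman_eq hφ hθ hdecay hinv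
  obtain ⟨C₂, ρ₂, hρ₂, hρ₂', h₂⟩ := exists_norm_mFourierCoeff_le_of_koopman_eq hφ hθ hdecay
    (koopman_torusSwap_eq_of_koopman_eq hφ hinv)
  refine .of_norm_bounded
    (((summable_pow_natAbs_add_natAbs hρ₁.le hρ₁').mul_left |C₁|).add
      ((summable_pow_natAbs_add_natAbs hρ₂.le hρ₂').mul_left |C₂|)) fun i ↦ ?_
  rcases le_total (i 0).natAbs (i 1).natAbs with hi | hi
  · calc ‖mFourierCoeff h i‖ ≤ C₁ * ρ₁ ^ ((i 0).natAbs + (i 1).natAbs) := h₁ i hi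
      _ ≤ |C₁| * ρ₁ ^ ((i 0).natAbs + (i 1).natAbs) := by gcongr; exact le_abs_self _
      _ ≤ _ := le_add_of_nonneg_right (by positivity)
  · calc ‖mFourierCoeff h i‖ ≤ C₂ * ρ₂ ^ ((i 1).natAbs + (i 0).natAbs) := by
          rw [← hcoeff]; exact h₂ ![i 1, i 0] hi
      _ ≤ |C₂| * ρ₂ ^ ((i 0).natAbs + (i 1).natAbs) := by
          rw [add_comm (i 1).natAbs]; gcongr; exact le_abs_self _
      _ ≤ _ := le_add_of_nonneg_left (by positivity)

theorem ergodic_standardMap (hφ : Measurable φ) {θ : ℝ} (hθ : θ < 1)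
    (hdecay : ∀ (n : ℕ) (k : ℤ), k.natAbs ≤ 2 * n → ‖fourierCoeff (fourier n ∘ φ) k‖ ≤ θ ^ n) :
    Ergodic (standardMap φ) volume := by
  have hT := measurePreserving_standardMap hφ
  refine ⟨hT, ⟨fun s hs hinv ↦ ?_⟩⟩
  have hinv' : koopman hφ (indicatorConstLp 2 hs (measure_ne_top _ s) (1 : ℂ)) =
      indicatorConstLp 2 hs (measure_ne_top _ s) (1 : ℂ) := by
    refine (Lp.indicatorConstLp_compMeasurePreserving hs (measure_ne_top _ s) (1 : ℂ) hT).trans ?_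
    simp only [hinv]
  obtain ⟨g, hg⟩ := exists_ae_eq_continuousMap_of_summable_mFourierCoeff _
    (summable_mFourierCoeff_of_koopman_eq hφ hθ hdecay hinv')
  exact eventuallyConst_of_indicator_ae_eq_continuous g.continuous
    (indicatorConstLp_coeFn.symm.trans hg)

/-- The representative in `[-1/2, 1/2)` of a point of the circle. -/
noncomputable def circleRep (t : UnitAddCircle) : ℝ :=
  AddCircle.measurableEquivIco 1 (-(1 : ℝ) / 2) t

theorem measurable_circleRep : Measurable circleRep :=
  measurable_subtype_coe.comp (AddCircle.measurableEquivIco 1 (-(1 : ℝ) / 2)).measurable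

theorem coe_circleRep (t : UnitAddCircle) : (circleRep t : UnitAddCircle) = t :=
  AddCircle.coe_equivIco

theorem circleRep_coe (x : ℝ) : circleRep x = rmod x := by
  have : circleRep x = toIcoMod one_pos (-(1 : ℝ) / 2) x := rfl
  rw [this, toIcoMod, toIcoDiv_eq_floor, rmod]
  simp [neg_div]

theorem measurePreserving_circleRep :
    MeasurePreserving circleRep volume (volume.restrict (Set.Ico (-(1 : ℝ) / 2) (1 / 2))) := by
  have hmk : MeasurePreserving ((↑) : ℝ → UnitAddCircle)
      (volume.restrict (Set.Ico (-(1 : ℝ) / 2) (-1 / 2 + 1))) volume := by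
    rw [restrict_Ico_eq_restrict_Ioc]
    have h := AddCircle.measurePreserving_mk 1 (-(1 : ℝ) / 2)
    rwa [AddCircle.volume_eq_smul_haarAddCircle, ENNReal.ofReal_one, one_smul] at h
  have hval := measurePreserving_subtype_coe
    (μa := volume) (measurableSet_Ico (a := -(1 : ℝ) / 2) (b := -1 / 2 + 1))
  have hsymm : MeasurePreserving (AddCircle.measurableEquivIco 1 (-(1 : ℝ) / 2)).symm _ volume :=
    hmk.comp hval
  rw [show (1 : ℝ) / 2 = -1 / 2 + 1 by norm_num]
  exact hval.comp hsymm.symm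

/-- The circle map `q ↦ 2q - 2ε tan(πq)`, for which `standardMap` becomes `Ttilde ε`. -/
noncomputable def tanMap (ε : ℝ) (t : UnitAddCircle) : UnitAddCircle :=
  ↑(2 * circleRep t - 2 * ε * tan (π * circleRep t))

theorem measurable_tan : Measurable tan := by
  simp only [funext tan_eq_sin_div_cos]
  fun_prop

theorem measurable_tanMap (ε : ℝ) : Measurable (tanMap ε) := by
  refine AddCircle.measurable_mk'.comp ?_
  have := measurable_circleRep
  have := measurable_tan
  fun_prop

theorem tanMap_coe (ε x : ℝ) : tanMap ε x = ↑(2 * x - 2 * ε * tan (π * x)) := by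
  have htan : tan (π * rmod x) = tan (π * x) := by
    rw [rmod, mul_sub, mul_comm π (⌊_⌋ : ℝ), tan_sub_int_mul_pi]
  have hdouble : ((2 * rmod x : ℝ) : UnitAddCircle) = ↑(2 * x) := by
    rw [two_mul, two_mul, AddCircle.coe_add, AddCircle.coe_add, ← circleRep_coe, coe_circleRep]
  rw [tanMap, circleRep_coe, htan, AddCircle.coe_sub, AddCircle.coe_sub, hdouble]

theorem fourierCoeff_fourier_comp_tanMap (ε : ℝ) (n k : ℤ) :
    fourierCoeff (fourier n ∘ tanMap ε) k =
      circleAverage (cayleyExp (2 * n - k) (-(4 * π * n * ε))) 0 1 := by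
  set F := cayleyExp (2 * n - k) (-(4 * π * n * ε)) with hF
  have hintegrand (x : ℝ) : fourier (-k) (x : UnitAddCircle) • (fourier n ∘ tanMap ε) x =
      F (circleMap 0 1 (2 * π * x)) := by
    rw [Function.comp_apply, tanMap_coe, fourier_coe_apply, fourier_coe_apply, smul_eq_mul,
      ← Complex.exp_add, hF, mul_assoc 2 π x, cayleyExp_circleMap]
    push_cast
    ring_nf
  rw [fourierCoeff_eq_intervalIntegral _ k 0, circleAverage,
    ← mul_one (2 * π), ← mul_zero (2 * π),
    ← intervalIntegral.smul_integral_comp_mul_left (fun θ ↦ F (circleMap 0 1 θ)) (2 * π),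
    mul_one, mul_zero, inv_smul_smul₀ two_pi_pos.ne']
  simp only [hintegrand]
  simp

theorem norm_fourierCoeff_fourier_comp_tanMap_le {ε : ℝ} {n : ℤ} (hn : n * ε ≤ 0) (k : ℤ) {r : ℝ}
    (hr : 0 < r) (hr' : r < 1) :
    ‖fourierCoeff (fourier n ∘ tanMap ε) k‖ ≤
      r ^ (2 * n - k) * exp (4 * π * (n * ε) * ((1 - r) / (1 + r))) := by
  have hκ : 0 ≤ -(4 * π * n * ε) := by
    rw [mul_assoc, neg_nonneg]
    exact mul_nonpos_of_nonneg_of_nonpos (by positivity) hn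
  rw [fourierCoeff_fourier_comp_tanMap]
  convert norm_circleAverage_cayleyExp_le (2 * n - k) hκ hr hr' using 3
  ring

theorem norm_fourierCoeff_fourier_comp_tanMap_le_of_neg {ε : ℝ} (hε : ε < 0) (n : ℕ) {k : ℤ}
    (hk : k.natAbs ≤ 2 * n) :
    ‖fourierCoeff (fourier n ∘ tanMap ε) k‖ ≤ exp (4 * π * ε / 3) ^ n := by
  have hn : ((n : ℤ) : ℝ) * ε ≤ 0 := mul_nonpos_of_nonneg_of_nonpos (by positivity) hε.le
  calc ‖fourierCoeff (fourier n ∘ tanMap ε) k‖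
      ≤ (1 / 2) ^ (2 * n - k) * exp (4 * π * ((n : ℤ) * ε) * ((1 - 1 / 2) / (1 + 1 / 2))) :=
        norm_fourierCoeff_fourier_comp_tanMap_le hn k (by norm_num) (by norm_num)
    _ ≤ 1 * exp (4 * π * ((n : ℤ) * ε) * ((1 - 1 / 2) / (1 + 1 / 2))) := by
        gcongr
        exact zpow_le_one₀ (by norm_num) (by norm_num) (by omega)
    _ = exp (4 * π * ε / 3) ^ n := by
        rw [← exp_nat_mul, one_mul]
        push_cast
        ring_nf

theorem norm_fourierCoeff_fourier_comp_tanMap_le_of_pos {ε : ℝ} (hε : 0 < ε) {r : ℝ} (hr : 0 < r)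
    (hr' : r < 1) (n : ℕ) {k : ℤ} (hk : k.natAbs ≤ 2 * n) :
    ‖fourierCoeff (fourier n ∘ tanMap ε) k‖ ≤
      (r ^ (-4 : ℤ) * exp (-(4 * π * ε * ((1 - r) / (1 + r))))) ^ n := by
  have hn : ((-n : ℤ) : ℝ) * ε ≤ 0 := by
    push_cast
    exact mul_nonpos_of_nonpos_of_nonneg (by simp) hε.le
  calc ‖fourierCoeff (fourier n ∘ tanMap ε) k‖
      = ‖fourierCoeff (fourier (-n) ∘ tanMap ε) (-k)‖ :=
        (norm_fourierCoeff_fourier_neg_comp n k).symm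
    _ ≤ r ^ (2 * (-n) - -k) * exp (4 * π * ((-n : ℤ) * ε) * ((1 - r) / (1 + r))) :=
        norm_fourierCoeff_fourier_comp_tanMap_le hn (-k) hr hr'
    _ ≤ r ^ (-4 * n : ℤ) * exp (4 * π * ((-n : ℤ) * ε) * ((1 - r) / (1 + r))) := by
        gcongr ?_ * _
        exact zpow_le_zpow_right_of_le_one₀ hr hr'.le (by lia)
    _ = _ := by
        rw [mul_pow, ← exp_nat_mul, zpow_mul, zpow_natCast]
        push_cast
        ring_nf

theorem exists_zpow_neg_four_mul_exp_lt_one {a : ℝ} (ha : 2 < a) :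
    ∃ r : ℝ, 0 < r ∧ r < 1 ∧ r ^ (-4 : ℤ) * exp (-(4 * a * ((1 - r) / (1 + r)))) < 1 := by
  obtain ⟨r, har, hr'⟩ : ∃ r, 1 / (a - 1) < r ∧ r < 1 :=
    exists_between (by rw [div_lt_one (by linarith)]; linarith)
  have hr : 0 < r := lt_trans (one_div_pos.2 (by linarith)) har
  have hlt : 1 + r < r * a := by
    rw [div_lt_iff₀ (by linarith)] at har
    linarith
  refine ⟨r, hr, hr', ?_⟩
  have hlog : -log r < a * ((1 - r) / (1 + r)) := by
    calc -log r ≤ (1 - r) / r := by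
          rw [sub_div, div_self hr.ne', one_div]
          linarith [one_sub_inv_le_log_of_pos hr]
      _ < a * ((1 - r) / (1 + r)) := by
          rw [← mul_div_assoc, div_lt_div_iff₀ hr (by linarith)]
          nlinarith [mul_pos (sub_pos.2 hr') (sub_pos.2 hlt)]
  have hpow : r ^ (-4 : ℤ) = exp (-4 * log r) := by
    rw [← rpow_intCast, rpow_def_of_pos hr, mul_comm]
    norm_num
  rw [hpow, ← exp_add, exp_lt_one_iff]
  linarith

theorem ergodic_standardMap_tanMap {ε : ℝ} (hε : ε < 0 ∨ 2 / π < ε) :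
    Ergodic (standardMap (tanMap ε)) volume := by
  rcases hε with hε | hε
  · have hθ : exp (4 * π * ε / 3) < 1 := by
      rw [exp_lt_one_iff]
      exact div_neg_of_neg_of_pos (mul_neg_of_pos_of_neg (by positivity) hε) three_pos
    exact ergodic_standardMap (measurable_tanMap ε) hθ fun n k ↦
      norm_fourierCoeff_fourier_comp_tanMap_le_of_neg hε n
  · obtain ⟨r, hr, hr', hθ⟩ := exists_zpow_neg_four_mul_exp_lt_one ((div_lt_iff₀' pi_pos).1 hε)
    rw [← mul_assoc 4] at hθ
    exact ergodic_standardMap (measurable_tanMap ε) hθ fun n k ↦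
      norm_fourierCoeff_fourier_comp_tanMap_le_of_pos (lt_trans (by positivity) hε) hr hr' n

/-- The coordinates in the fundamental domain `I × I` of a point of the torus. -/
noncomputable def torusRep (t : UnitAddTorus (Fin 2)) : ℝ × ℝ :=
  (circleRep (t 0), circleRep (t 1))

theorem measurePreserving_torusRep : MeasurePreserving torusRep volume unifSq := by
  rw [unifSq, unitSq, Measure.volume_eq_prod, ← Measure.prod_restrict]
  exact (measurePreserving_circleRep.prod measurePreserving_circleRep).comp
    (volume_preserving_finTwoArrow UnitAddCircle)

theorem semiconj_torusRep_standardMap_Ttilde (ε : ℝ) :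
    Function.Semiconj torusRep (standardMap (tanMap ε)) (Ttilde ε) := by
  intro t
  have hsub (y : ℝ) : circleRep (y - t 0) = rmod (y - circleRep (t 0)) := by
    rw [← circleRep_coe, AddCircle.coe_sub, coe_circleRep]
  have hid : circleRep (t 1) = rmod (circleRep (t 1)) := by
    rw [← circleRep_coe, coe_circleRep]
  refine Prod.ext hid ((hsub _).trans (congrArg rmod ?_))
  simp only [torusRep]
  ring

theorem measurable_Ttilde (ε : ℝ) : Measurable (Ttilde ε) := by
  have := measurable_tan
  unfold Ttilde rmod
  fun_prop

end Torus

theorem stmt11 (ε : ℝ) (hε : ε < 0 ∨ 2 / Real.pi < ε) :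
    Ergodic (Ttilde ε) unifSq := by
  exact measurePreserving_torusRep.ergodic_of_ergodic_semiconj (ergodic_standardMap_tanMap hε)
    (measurable_Ttilde ε) (semiconj_torusRep_standardMap_Ttilde ε)
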